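/- Let k ≥ 1 be an integer and define h_k : ℂ∖{0} → ℝ by h_k(z) = k²·|z|^{2(k−1)}·(1 + |z|^{2k}·u(|z|^{2k})²). Then for every z ∈ ℂ∖{0}: h_k(z)·(∂∂̄h_k)(z) − (∂h_k)(z)·(∂̄h_k)(z) = k⁶·|z|^{6k−6}·M(|z|^{2k}). -/

import Mathlib

open Complex Filter Topology Metric
open scoped ComplexOrder

/-- The function `u(t) = (t-1)/(t log t)` for `t ≠ 1`, extended by `u(1) = 1`. -/
noncomputable def u (t : ℝ) : ℝ := if t = 1 then 1 else (t - 1) / (t * Real.log t)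

/-- Wirtinger derivative `∂g` of a complex-valued function on `ℂ` (real-differentiable sense). -/
noncomputable def wdz (g : ℂ → ℂ) (z : ℂ) : ℂ :=
  (fderiv ℝ g z 1 - Complex.I * fderiv ℝ g z Complex.I) / 2

/-- Wirtinger derivative `∂̄g` of a complex-valued function on `ℂ`. -/
noncomputable def wdzbar (g : ℂ → ℂ) (z : ℂ) : ℂ :=
  (fderiv ℝ g z 1 + Complex.I * fderiv ℝ g z Complex.I) / 2

/-- `∂h` for a real-valued `h`. -/
noncomputable def wdzR (h : ℂ → ℝ) : ℂ → ℂ := wdz fun w => (h w : ℂ)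

/-- `∂̄h` for a real-valued `h`. -/
noncomputable def wdzbarR (h : ℂ → ℝ) : ℂ → ℂ := wdzbar fun w => (h w : ℂ)

/-- `∂∂̄h` for a real-valued `h`. -/
noncomputable def wlapR (h : ℂ → ℝ) : ℂ → ℂ := wdz (wdzbarR h)

/-- The numerator `h·∂∂̄h − ∂h·∂̄h` of (−1/2 times) the Gaussian curvature of `h|dz|²`. -/
noncomputable def curvNum (h : ℂ → ℝ) (z : ℂ) : ℂ :=
  (h z : ℂ) * wlapR h z - wdzR h z * wdzbarR h z

/-- The Gaussian curvature `K = −2(h·∂∂̄h − ∂h·∂̄h)/h³` of the conformal metric `h|dz|²`. -/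
noncomputable def gaussCurv (h : ℂ → ℝ) (z : ℂ) : ℂ :=
  -2 * curvNum h z / (h z : ℂ) ^ 3

/-- The function `M` from the paper, built from `u`, `u′ = deriv u`, `u″ = deriv (deriv u)`. -/
noncomputable def Mfun (t : ℝ) : ℝ :=
  u t ^ 2 + 6 * t * u t * deriv u t + 2 * t ^ 2 * (deriv u t) ^ 2 +
    2 * t ^ 2 * u t * deriv (deriv u) t + 2 * t ^ 2 * (u t) ^ 3 * deriv u t -
    2 * t ^ 3 * (u t) ^ 2 * (deriv u t) ^ 2 + 2 * t ^ 3 * (u t) ^ 3 * deriv (deriv u) t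

theorem u_eq (t : ℝ) : u t = (t * dslope Real.log 1 t)⁻¹ := by
  unfold u
  split_ifs with h
  · subst h; simp [dslope_same]
  · rw [dslope_of_ne _ h, slope_def_field]
    simp [div_eq_mul_inv]
    ring

theorem u_an (t : ℝ) (ht : 0 < t) : AnalyticAt ℝ u t := by
  have e : u = fun t => (t * dslope Real.log 1 t)⁻¹ := funext u_eq
  by_cases h : t = 1
  · subst h
    rw [e]
    obtain ⟨p, hp⟩ := analyticAt_log (x := (1:ℝ)) one_pos
    have h2 : AnalyticAt ℝ (dslope Real.log 1) 1 := ⟨_, hp.has_fpower_series_dslope_fslope⟩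
    refine AnalyticAt.inv (analyticAt_id.mul h2) ?_
    simp [dslope_same]
  · have : (fun t : ℝ => (t - 1) / (t * Real.log t)) =ᶠ[𝓝 t] u := by
      filter_upwards [isOpen_ne.mem_nhds h] with s hs
      have hs' : s ≠ 1 := hs
      simp [u, hs']
    refine AnalyticAt.congr ?_ this
    refine AnalyticAt.div (analyticAt_id.sub analyticAt_const)
      (analyticAt_id.mul (analyticAt_log ht)) ?_
    exact mul_ne_zero ht.ne' (Real.log_ne_zero_of_pos_of_ne_one ht h)

theorem hasD_pow (n : ℕ) (s : ℝ) (hs : 0 < s) :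
    HasDerivAt (fun s : ℝ => s ^ n) (n * s ^ n / s) s := by
  have := hasDerivAt_pow n s
  refine this.congr_deriv ?_
  cases n with
  | zero => simp
  | succ n =>
    rw [Nat.add_sub_cancel, pow_succ]
    field_simp

theorem hasD_radial (Φ Φ1 : ℝ → ℝ) (z : ℂ) (h1 : HasDerivAt Φ (Φ1 (normSq z)) (normSq z)) :
    HasFDerivAt (fun w : ℂ => ((Φ (normSq w) : ℝ) : ℂ))
      (ofRealCLM.comp (Φ1 (normSq z) • ((2 * z.re) • reCLM + (2 * z.im) • imCLM))) z := by
  have hn : HasFDerivAt (fun w : ℂ => normSq w) ((2 * z.re) • reCLM + (2 * z.im) • imCLM) z := by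
    have hr : HasFDerivAt (fun w : ℂ => w.re) reCLM z := reCLM.hasFDerivAt
    have hi : HasFDerivAt (fun w : ℂ => w.im) imCLM z := imCLM.hasFDerivAt
    have := (hr.mul hr).add (hi.mul hi)
    simp only [normSq_apply]
    refine this.congr_fderiv ?_
    ext <;> simp <;> ring
  exact ofRealCLM.hasFDerivAt.comp z (h1.comp_hasFDerivAt z hn)

theorem curv_radial (Φ Φ1 Φ2 : ℝ → ℝ) (h1 : ∀ s, 0 < s → HasDerivAt Φ (Φ1 s) s)
    (h2 : ∀ s, 0 < s → HasDerivAt Φ1 (Φ2 s) s) (z : ℂ) (hz : z ≠ 0) :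
    curvNum (fun w => Φ (normSq w)) z =
      ((Φ (normSq z) * (Φ1 (normSq z) + normSq z * Φ2 (normSq z))
        - normSq z * Φ1 (normSq z) ^ 2 : ℝ) : ℂ) := by
  have hb : ∀ w : ℂ, w ≠ 0 → wdzbarR (fun w => Φ (normSq w)) w = Φ1 (normSq w) * w := by
    intro w hw
    have hd := hasD_radial Φ Φ1 w (h1 _ (normSq_pos.2 hw))
    unfold wdzbarR wdzbar
    rw [hd.fderiv]
    apply Complex.ext <;> simp <;> ring
  have hdz : wdzR (fun w => Φ (normSq w)) z = Φ1 (normSq z) * (starRingEnd ℂ) z := by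
    have hd := hasD_radial Φ Φ1 z (h1 _ (normSq_pos.2 hz))
    unfold wdzR wdz
    rw [hd.fderiv]
    apply Complex.ext <;> simp <;> ring
  have hl : wlapR (fun w => Φ (normSq w)) z =
      ((Φ1 (normSq z) + normSq z * Φ2 (normSq z) : ℝ) : ℂ) := by
    have hev : wdzbarR (fun w => Φ (normSq w)) =ᶠ[𝓝 z]
        fun w => (Φ1 (normSq w) : ℂ) * w := by
      filter_upwards [isOpen_ne.mem_nhds hz] with w hw using hb w hw
    have hd := (hasD_radial Φ1 Φ2 z (h2 _ (normSq_pos.2 hz))).mul (hasFDerivAt_id (𝕜 := ℝ) z)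
    have hd' := hd.congr_of_eventuallyEq hev
    unfold wlapR wdz
    rw [hd'.fderiv]
    apply Complex.ext <;> simp [normSq_apply] <;> ring
  unfold curvNum
  rw [hb z hz, hdz, hl]
  have : (Φ1 (normSq z) : ℂ) * (starRingEnd ℂ) z * (Φ1 (normSq z) * z) =
      (normSq z : ℂ) * Φ1 (normSq z) ^ 2 := by
    rw [normSq_eq_conj_mul_self]; ring
  rw [this]; push_cast; ring

/-- the curvature numerator identity
`h_k·∂∂̄h_k − ∂h_k·∂̄h_k = k⁶|z|^{6k−6}·M(|z|^{2k})` on `ℂ∖{0}`. -/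
theorem stmt13 (k : ℕ) (hk : 1 ≤ k) :
    ∀ z : ℂ, z ≠ 0 →
      curvNum (fun w =>
          (k : ℝ) ^ 2 * ‖w‖ ^ (2 * (k - 1)) *
            (1 + ‖w‖ ^ (2 * k) * u (‖w‖ ^ (2 * k)) ^ 2)) z =
        (((k : ℝ) ^ 6 * ‖z‖ ^ (6 * k - 6) * Mfun (‖z‖ ^ (2 * k)) : ℝ) : ℂ) := by
  intro z hz
  obtain ⟨n, rfl⟩ : ∃ n, k = n + 1 := ⟨k - 1, by omega⟩
  have e1 : ∀ (w : ℂ) (m : ℕ), ‖w‖ ^ (2 * m) = normSq w ^ m := by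
    intro w m; rw [pow_mul, Complex.normSq_eq_norm_sq]
  have e2 : 6 * (n + 1) - 6 = 2 * (n * 3) := by omega
  rw [e2]
  simp only [e1, Nat.add_sub_cancel]
  set c : ℝ := ((n + 1 : ℕ) : ℝ) with hc
  have hu1 : ∀ t, 0 < t → HasDerivAt u (deriv u t) t := fun t ht =>
    (u_an t ht).differentiableAt.hasDerivAt
  have hu2 : ∀ t, 0 < t → HasDerivAt (deriv u) (deriv (deriv u) t) t := fun t ht =>
    (u_an t ht).deriv.differentiableAt.hasDerivAt
  let F : ℝ → ℝ := fun t => 1 + t * u t ^ 2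
  let F1 : ℝ → ℝ := fun t => u t ^ 2 + 2 * t * u t * deriv u t
  let F2 : ℝ → ℝ := fun t => 4 * u t * deriv u t + 2 * t * deriv u t ^ 2
    + 2 * t * u t * deriv (deriv u) t
  have hF : ∀ t, 0 < t → HasDerivAt F (F1 t) t := fun t ht => by
    have := ((hasDerivAt_id t).mul ((hu1 t ht).pow 2)).const_add 1
    refine this.congr_deriv ?_
    simp [F1]; ring
  have hF1 : ∀ t, 0 < t → HasDerivAt F1 (F2 t) t := fun t ht => by
    have := ((hu1 t ht).pow 2).add
      ((((hasDerivAt_id t).const_mul 2).mul (hu1 t ht)).mul (hu2 t ht))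
    refine this.congr_deriv ?_
    simp [F2]; ring
  have hP : ∀ s : ℝ, 0 < s → HasDerivAt (fun s : ℝ => s ^ (n + 1)) (c * s ^ n) s := by
    intro s hs
    refine (hasDerivAt_pow (n + 1) s).congr_deriv ?_
    simp [hc]
  let Φ1 : ℝ → ℝ := fun s => c ^ 2 * (n * s ^ n / s) * F (s ^ (n + 1))
    + c ^ 2 * s ^ n * (F1 (s ^ (n + 1)) * (c * s ^ n))
  let Φ2 : ℝ → ℝ := fun s =>
    c ^ 2 * (n * (n * s ^ n / s) / s - n * s ^ n / s ^ 2) * F (s ^ (n + 1))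
    + c ^ 2 * (n * s ^ n / s) * (F1 (s ^ (n + 1)) * (c * s ^ n))
    + c ^ 2 * (n * s ^ n / s) * (F1 (s ^ (n + 1)) * (c * s ^ n))
    + c ^ 2 * s ^ n * (F2 (s ^ (n + 1)) * (c * s ^ n) * (c * s ^ n)
      + F1 (s ^ (n + 1)) * (c * (n * s ^ n / s)))
  have hΦ : ∀ s, 0 < s → HasDerivAt (fun s => c ^ 2 * s ^ n * F (s ^ (n + 1))) (Φ1 s) s := by
    intro s hs
    have a := HasDerivAt.comp (h := fun s : ℝ => s ^ (n + 1)) s (hF _ (pow_pos hs (n + 1))) (hP s hs)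
    exact ((hasD_pow n s hs).const_mul (c ^ 2)).mul a
  have hΦ1 : ∀ s, 0 < s → HasDerivAt Φ1 (Φ2 s) s := by
    intro s hs
    have a := HasDerivAt.comp (h := fun s : ℝ => s ^ (n + 1)) s (hF _ (pow_pos hs (n + 1))) (hP s hs)
    have b := HasDerivAt.comp (h := fun s : ℝ => s ^ (n + 1)) s (hF1 _ (pow_pos hs (n + 1))) (hP s hs)
    have p := hasD_pow n s hs
    have q := (p.const_mul (n : ℝ)).div (hasDerivAt_id s) hs.ne'
    have := ((q.const_mul (c ^ 2)).mul a).add ((p.const_mul (c ^ 2)).mul (b.mul (p.const_mul c)))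
    refine this.congr_deriv ?_
    simp [Φ2]
    field_simp
    ring
  have key := curv_radial (fun s => c ^ 2 * s ^ n * F (s ^ (n + 1))) Φ1 Φ2 hΦ hΦ1 z hz
  refine key.trans ?_
  congr 1
  have hs := normSq_pos.2 hz
  generalize normSq z = s at hs
  simp only [Φ1, Φ2, Mfun, F, F1, F2]
  generalize u (s ^ (n + 1)) = a
  generalize deriv u (s ^ (n + 1)) = b
  generalize deriv (deriv u) (s ^ (n + 1)) = d
  rw [pow_succ s n, pow_mul]
  generalize s ^ n = X
  have : (n : ℝ) = c - 1 := by simp [hc]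
  rw [this]
  generalize c = c
  field_simp
  ring
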